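/- arXiv:2407.07280 — 5 statements merged into one kernel-verified Lean document; each statement's English description precedes it below -/
import Mathlib

section
/- Let K be a field, let q ∈ K with q ≠ 0, let b ∈ K, and let a : ℤ → K be a sequence satisfying the three-term recurrence a(n+1) + a(n-1) = (q + q⁻¹)·a(n) for all n ∈ ℤ. If a(1)·a(-1) = a(0)² − b, then a(n+1)·a(n-1) = a(n)² − b for all n ∈ ℤ. (Equivalently, for every n ∈ ℤ the elements a(n+1) and a(n-1) are the two solutions of the quadratic equation x² − (q + q⁻¹)·a(n)·x + a(n)² − b = 0.) -/
/-!
The Casoratian (discrete Wronskian) of two solutions of `u (n + 1) + u (n - 1) = c n * u n` does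
not depend on `n`. For constant `c` the shift `n ↦ a (n - 1)` of a solution `a` is again a solution,
and the Casoratian of `a` with its shift is `a (n + 1) * a (n - 1) - a n ^ 2`.
-/

section Casoratian

variable {R : Type*} [CommRing R]

/-- The Casoratian of two bi-infinite sequences, the discrete analogue of the Wronskian, with the
sign convention `u (n + 1) * v n - u n * v (n + 1)`. -/
def casoratian (u v : ℤ → R) (n : ℤ) : R :=
  u (n + 1) * v n - u n * v (n + 1)

theorem casoratian_sub_one_right (a : ℤ → R) (n : ℤ) :
    casoratian a (fun k ↦ a (k - 1)) n = a (n + 1) * a (n - 1) - a n ^ 2 := by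
  simp only [casoratian, add_sub_cancel_right, sq]

theorem casoratian_periodic_one {c u v : ℤ → R}
    (hu : ∀ n, u (n + 1) + u (n - 1) = c n * u n)
    (hv : ∀ n, v (n + 1) + v (n - 1) = c n * v n) :
    Function.Periodic (casoratian u v) 1 := by
  intro n
  have hu_succ := hu (n + 1)
  have hv_succ := hv (n + 1)
  rw [add_sub_cancel_right] at hu_succ hv_succ
  unfold casoratian
  linear_combination v (n + 1) * hu_succ - u (n + 1) * hv_succ

theorem casoratian_eq_casoratian_zero {c u v : ℤ → R}
    (hu : ∀ n, u (n + 1) + u (n - 1) = c n * u n)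
    (hv : ∀ n, v (n + 1) + v (n - 1) = c n * v n) (n : ℤ) :
    casoratian u v n = casoratian u v 0 := by
  simpa only [Int.cast_id, mul_one] using (casoratian_periodic_one hu hv).int_mul_eq n

end Casoratian

theorem stmt_0_general {R : Type*} [CommRing R] (c b : R) (a : ℤ → R)
    (hrec : ∀ n : ℤ, a (n + 1) + a (n - 1) = c * a n)
    (hinit : a 1 * a (-1) = a 0 ^ 2 - b) (n : ℤ) :
    a (n + 1) * a (n - 1) = a n ^ 2 - b := by
  have hrec_shift (k : ℤ) : a (k + 1 - 1) + a (k - 1 - 1) = c * a (k - 1) := by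
    simpa only [add_sub_cancel_right, sub_add_cancel] using hrec (k - 1)
  have hconst : a (n + 1) * a (n - 1) - a n ^ 2 = a 1 * a (-1) - a 0 ^ 2 := by
    simpa only [casoratian_sub_one_right, zero_add, zero_sub] using
      casoratian_eq_casoratian_zero (c := fun _ ↦ c) (v := fun k ↦ a (k - 1)) hrec hrec_shift n
  linear_combination hconst + hinit

/-- If a sequence `a : ℤ → K` satisfies the three-term recurrence
`a (n+1) + a (n-1) = (q + q⁻¹) * a n` and the initial condition
`a 1 * a (-1) = a 0 ^ 2 - b`, then `a (n+1) * a (n-1) = a n ^ 2 - b` for all `n : ℤ`. -/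
theorem stmt_0 {K : Type*} [Field K] (q : K) (hq : q ≠ 0) (b : K) (a : ℤ → K)
    (hrec : ∀ n : ℤ, a (n + 1) + a (n - 1) = (q + q⁻¹) * a n)
    (hinit : a 1 * a (-1) = (a 0) ^ 2 - b) :
    ∀ n : ℤ, a (n + 1) * a (n - 1) = (a n) ^ 2 - b :=
  stmt_0_general (q + q⁻¹) b a hrec hinit
end

section
/- Let K be a field, let q ∈ K with q ≠ 0 and q² ≠ 1, let b ∈ K, and let a : ℤ → K satisfy the three-term recurrence a(n+1) + a(n-1) = (q + q⁻¹)·a(n) for all n ∈ ℤ together with a(1)·a(-1) = a(0)² − b. Then for every integer n ≥ 0 one has a(n)·a(-n) = a(0)² − [n]²·b, where [n] := (qⁿ − q⁻ⁿ)/(q − q⁻¹) is the balanced q-integer. -/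
/-!
A solution of `a (n + 1) + a (n - 1) = t * a n` is determined by two consecutive terms, with
coefficients the rescaled Chebyshev polynomials `S` at `t`:
`a n = S (n - 1) * a 1 - S (n - 2) * a 0`. The recurrence is invariant under `n ↦ -n`, so likewise
`a (-n) = S (n - 1) * a (-1) - S (n - 2) * a 0`. In the product of the two, `a 1 + a (-1) = t * a 0`
and the identity `S (n - 2) ^ 2 + S (n - 1) ^ 2 - t * S (n - 2) * S (n - 1) = 1` leave
`a 0 ^ 2 - S (n - 1) ^ 2 * b`. Finally `n ↦ q ^ n - q ^ (-n)` solves the recurrence for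
`t = q + q⁻¹` and vanishes at `0`, so `S (n - 1)` at `q + q⁻¹` is the balanced `q`-integer `[n]`.
-/

open Polynomial Polynomial.Chebyshev

section ThreeTermRecurrence

variable {R M : Type*} [CommRing R] [AddCommGroup M] [Module R M] {t : R}

theorem threeTermRecurrence_ext {a a' : ℤ → M} (ha : ∀ n, a (n + 1) + a (n - 1) = t • a n)
    (ha' : ∀ n, a' (n + 1) + a' (n - 1) = t • a' n) (zero : a 0 = a' 0) (one : a 1 = a' 1)
    (n : ℤ) : a n = a' n := by
  induction n using Chebyshev.induct with
  | zero => exact zero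
  | one => exact one
  | add_two n ih_succ ih =>
    have step {c : ℤ → M} (hc : ∀ k, c (k + 1) + c (k - 1) = t • c k) :
        c (n + 2) = t • c (n + 1) - c n := by
      rw [← hc, add_sub_cancel_right, add_sub_cancel_right, add_assoc, one_add_one_eq_two]
    rw [step ha, step ha', ih_succ, ih]
  | neg_add_one n ih ih_succ =>
    have step {c : ℤ → M} (hc : ∀ k, c (k + 1) + c (k - 1) = t • c k) :
        c (-n - 1) = t • c (-n) - c (-n + 1) := by
      rw [← hc, add_sub_cancel_left]
    rw [step ha, step ha', ih, ih_succ]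

theorem eval_S_add_one_add_eval_S_sub_one (t : R) (n : ℤ) :
    (S R (n + 1)).eval t + (S R (n - 1)).eval t = t * (S R n).eval t := by
  rw [S_add_one, eval_sub, eval_mul, eval_X, sub_add_cancel]

theorem eq_eval_S_smul_sub_of_threeTermRecurrence {a : ℤ → M}
    (hrec : ∀ n, a (n + 1) + a (n - 1) = t • a n) (n : ℤ) :
    a n = (S R (n - 1)).eval t • a 1 - (S R (n - 2)).eval t • a 0 := by
  refine threeTermRecurrence_ext
    (a' := fun k ↦ (S R (k - 1)).eval t • a 1 - (S R (k - 2)).eval t • a 0)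
    hrec (fun k ↦ ?_) (by simp) (by simp) n
  have hS₁ := eval_S_add_one_add_eval_S_sub_one t (k - 1)
  have hS₂ := eval_S_add_one_add_eval_S_sub_one t (k - 2)
  rw [sub_add_eq_add_sub, sub_right_comm] at hS₁ hS₂
  linear_combination (norm := module) hS₁ • a 1 - hS₂ • a 0

theorem neg_eq_eval_S_smul_sub_of_threeTermRecurrence {a : ℤ → M}
    (hrec : ∀ n, a (n + 1) + a (n - 1) = t • a n) (n : ℤ) :
    a (-n) = (S R (n - 1)).eval t • a (-1) - (S R (n - 2)).eval t • a 0 := by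
  have hrec_neg (k : ℤ) : a (-(k + 1)) + a (-(k - 1)) = t • a (-k) := by
    rw [← hrec, add_comm, neg_sub', sub_neg_eq_add, neg_add']
  simpa using eq_eval_S_smul_sub_of_threeTermRecurrence (a := fun k ↦ a (-k)) hrec_neg n

end ThreeTermRecurrence

theorem eval_S_sub_one_mul_units_sub_inv {R : Type*} [CommRing R] (u : Rˣ) (n : ℤ) :
    (S R (n - 1)).eval (u + ↑u⁻¹ : R) * (u - ↑u⁻¹ : R) = ↑(u ^ n) - ↑(u ^ (-n)) := by
  have hrec (k : ℤ) : ((u ^ (k + 1) : Rˣ) - (u ^ (-(k + 1)) : Rˣ) : R) +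
      ((u ^ (k - 1) : Rˣ) - (u ^ (-(k - 1)) : Rˣ)) =
      (u + ↑u⁻¹ : R) • ((u ^ k : Rˣ) - (u ^ (-k) : Rˣ) : R) := by
    simp only [neg_add', neg_sub', sub_neg_eq_add, zpow_add_one, zpow_sub_one, Units.val_mul,
      smul_eq_mul]
    ring
  simpa using (eq_eval_S_smul_sub_of_threeTermRecurrence
    (a := fun k : ℤ ↦ ((u ^ k : Rˣ) - (u ^ (-k) : Rˣ) : R)) hrec n).symm

theorem eval_S_sub_one_add_inv {K : Type*} [Field K] {q : K} (hq : q ≠ 0) (hq2 : q ^ 2 ≠ 1)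
    (n : ℤ) : (S K (n - 1)).eval (q + q⁻¹) = (q ^ n - q⁻¹ ^ n) / (q - q⁻¹) := by
  have hsub : q - q⁻¹ ≠ 0 := by
    rwa [sub_ne_zero, Ne, ← mul_eq_one_iff_eq_inv₀ hq, ← sq]
  rw [eq_div_iff hsub]
  simpa using eval_S_sub_one_mul_units_sub_inv (Units.mk0 q hq) n

theorem stmt_2_general {R : Type*} [CommRing R] {t b : R} {a : ℤ → R}
    (hrec : ∀ n, a (n + 1) + a (n - 1) = t * a n) (hinit : a 1 * a (-1) = a 0 ^ 2 - b) (n : ℤ) :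
    a n * a (-n) = a 0 ^ 2 - (S R (n - 1)).eval t ^ 2 * b := by
  set s := (S R (n - 1)).eval t
  set r := (S R (n - 2)).eval t
  have hpos : a n = s * a 1 - r * a 0 :=
    eq_eval_S_smul_sub_of_threeTermRecurrence (a := a) (t := t) hrec n
  have hneg : a (-n) = s * a (-1) - r * a 0 :=
    neg_eq_eval_S_smul_sub_of_threeTermRecurrence (a := a) (t := t) hrec n
  have hsum : a 1 + a (-1) = t * a 0 := by simpa using hrec 0
  have hnorm : r ^ 2 + s ^ 2 - t * r * s = 1 := by
    simpa [show n - 2 + 1 = n - 1 by ring] using congrArg (eval t) (S_sq_add_S_sq R (n - 2))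
  calc a n * a (-n)
      = (s * a 1 - r * a 0) * (s * a (-1) - r * a 0) := by rw [hpos, hneg]
    _ = s ^ 2 * (a 1 * a (-1)) - s * r * a 0 * (a 1 + a (-1)) + r ^ 2 * a 0 ^ 2 := by ring
    _ = (r ^ 2 + s ^ 2 - t * r * s) * a 0 ^ 2 - s ^ 2 * b := by rw [hinit, hsum]; ring
    _ = a 0 ^ 2 - s ^ 2 * b := by rw [hnorm, one_mul]

/-- If a sequence `a : ℤ → K` satisfies the three-term recurrence and the initial
condition `a 1 * a (-1) = a 0 ^ 2 - b`, then for every `n : ℕ`,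
`a n * a (-n) = a 0 ^ 2 - [n]^2 * b`, where `[n] = (qⁿ - q⁻ⁿ)/(q - q⁻¹)`. -/
theorem stmt_2 {K : Type*} [Field K] (q : K) (hq : q ≠ 0) (hq2 : q ^ 2 ≠ 1) (b : K)
    (a : ℤ → K)
    (hrec : ∀ n : ℤ, a (n + 1) + a (n - 1) = (q + q⁻¹) * a n)
    (hinit : a 1 * a (-1) = (a 0) ^ 2 - b) :
    ∀ n : ℕ, a (n : ℤ) * a (-(n : ℤ)) =
      (a 0) ^ 2 - ((q ^ n - q⁻¹ ^ n) / (q - q⁻¹)) ^ 2 * b := by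
  intro n
  simpa only [eval_S_sub_one_add_inv hq hq2, zpow_natCast] using stmt_2_general hrec hinit n
end

section
/- Let K be a field, let q ∈ K with q ≠ 0 and q² ≠ 1, let b ∈ K, and let a : ℤ → K satisfy the three-term recurrence a(n+1) + a(n-1) = (q + q⁻¹)·a(n) for all n ∈ ℤ together with a(1)·a(-1) = a(0)² − b. Then for every integer n ≥ 1, both a(n) and a(-n) are roots of the quadratic polynomial x² − (qⁿ + q⁻ⁿ)·a(0)·x + a(0)² − [n]²·b; that is, a(±n)² − (qⁿ + q⁻ⁿ)·a(0)·a(±n) + a(0)² − [n]²·b = 0, where [n] := (qⁿ − q⁻ⁿ)/(q − q⁻¹). -/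
/-!
A solution of `c (n + 2) = (q + r) * c (n + 1) - q * r * c n` has `c (n + 1) - q * c n` geometric
of ratio `r`. Summing, `c n - qⁿ * c 0 = [n] * (c 1 - q * c 0)` with `[n] = ∑ qⁱ * rⁿ⁻¹⁻ⁱ`, and
likewise with `q` and `r` exchanged. When `q * r = 1`, the product of these two identities is the
quadratic equation for `c n`, because the initial condition says that
`(c 1 - q * c 0) * (c 1 - r * c 0) = b`. Negative indices follow by applying this to the reversed
sequence `n ↦ a (-n)`.
-/

open Finset

section LinearRecurrence

variable {R : Type*} [CommRing R] {q r : R} {c : ℕ → R}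

theorem succ_sub_mul_eq_pow_mul_of_recurrence
    (hc : ∀ n, c (n + 2) = (q + r) * c (n + 1) - q * r * c n) (n : ℕ) :
    c (n + 1) - q * c n = r ^ n * (c 1 - q * c 0) := by
  induction n with
  | zero => simp
  | succ n ih =>
    calc c (n + 2) - q * c (n + 1) = r * (c (n + 1) - q * c n) := by rw [hc]; ring
      _ = r ^ (n + 1) * (c 1 - q * c 0) := by rw [ih]; ring

theorem sub_pow_mul_eq_geom_sum₂_mul_of_recurrence
    (hc : ∀ n, c (n + 2) = (q + r) * c (n + 1) - q * r * c n) (n : ℕ) :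
    c n - q ^ n * c 0 = (∑ i ∈ range n, r ^ i * q ^ (n - 1 - i)) * (c 1 - q * c 0) := by
  induction n with
  | zero => simp
  | succ n ih =>
    have hgeom := succ_sub_mul_eq_pow_mul_of_recurrence hc n
    rw [Nat.add_sub_cancel, geom_sum₂_succ_eq]
    linear_combination hgeom + q * ih

theorem sub_pow_mul_mul_sub_pow_mul_of_recurrence
    (hc : ∀ n, c (n + 2) = (q + r) * c (n + 1) - q * r * c n) (n : ℕ) :
    (c n - q ^ n * c 0) * (c n - r ^ n * c 0) =
      (∑ i ∈ range n, q ^ i * r ^ (n - 1 - i)) ^ 2 * ((c 1 - q * c 0) * (c 1 - r * c 0)) := by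
  have hc_swap (k : ℕ) : c (k + 2) = (r + q) * c (k + 1) - r * q * c k := by
    rw [hc, add_comm r, mul_comm r]
  rw [sub_pow_mul_eq_geom_sum₂_mul_of_recurrence hc,
    sub_pow_mul_eq_geom_sum₂_mul_of_recurrence hc_swap, geom_sum₂_comm r q]
  ring

end LinearRecurrence

section ThreeTermRecurrence

variable {R : Type*} [CommRing R] {q r b : R} {a : ℤ → R}

theorem quadratic_eq_zero_of_three_term_recurrence (hqr : q * r = 1)
    (hrec : ∀ n : ℤ, a (n + 1) + a (n - 1) = (q + r) * a n)
    (hinit : a 1 * a (-1) = a 0 ^ 2 - b) (n : ℕ) :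
    a n ^ 2 - (q ^ n + r ^ n) * a 0 * a n + a 0 ^ 2 -
      (∑ i ∈ range n, q ^ i * r ^ (n - 1 - i)) ^ 2 * b = 0 := by
  have hpow : q ^ n * r ^ n = 1 := by rw [← mul_pow, hqr, one_pow]
  have hnat (k : ℕ) : a (k + 2 : ℕ) = (q + r) * a (k + 1 : ℕ) - q * r * a k := by
    have h := hrec (k + 1)
    rw [add_sub_cancel_right, add_assoc, one_add_one_eq_two] at h
    push_cast
    linear_combination h + a k * hqr
  have hb : (a 1 - q * a 0) * (a 1 - r * a 0) = b := by
    have h := hrec 0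
    rw [zero_add, zero_sub] at h
    linear_combination a 1 * h - hinit + a 0 ^ 2 * hqr
  have hfactor := sub_pow_mul_mul_sub_pow_mul_of_recurrence (c := fun k ↦ a k) hnat n
  simp only [Nat.cast_zero, Nat.cast_one, hb] at hfactor
  linear_combination hfactor - a 0 ^ 2 * hpow

theorem three_term_recurrence_comp_neg {t : R}
    (hrec : ∀ n : ℤ, a (n + 1) + a (n - 1) = t * a n) (n : ℤ) :
    a (-(n + 1)) + a (-(n - 1)) = t * a (-n) := by
  rw [← hrec (-n), add_comm, neg_add', neg_sub', sub_neg_eq_add]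

theorem stmt_3_general (hqr : q * r = 1)
    (hrec : ∀ n : ℤ, a (n + 1) + a (n - 1) = (q + r) * a n)
    (hinit : a 1 * a (-1) = a 0 ^ 2 - b) (n : ℕ) :
    a n ^ 2 - (q ^ n + r ^ n) * a 0 * a n + a 0 ^ 2 -
        (∑ i ∈ range n, q ^ i * r ^ (n - 1 - i)) ^ 2 * b = 0 ∧
      a (-n) ^ 2 - (q ^ n + r ^ n) * a 0 * a (-n) + a 0 ^ 2 -
        (∑ i ∈ range n, q ^ i * r ^ (n - 1 - i)) ^ 2 * b = 0 := by
  have hinit_neg : a (-1) * a (- -1) = a (-0) ^ 2 - b := by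
    rw [neg_neg, neg_zero, mul_comm, hinit]
  refine ⟨quadratic_eq_zero_of_three_term_recurrence hqr hrec hinit n, ?_⟩
  simpa only [neg_zero] using quadratic_eq_zero_of_three_term_recurrence (a := fun k ↦ a (-k)) hqr
    (three_term_recurrence_comp_neg hrec) hinit_neg n

end ThreeTermRecurrence

/-- If a sequence `a : ℤ → K` satisfies the three-term recurrence and the initial
condition `a 1 * a (-1) = a 0 ^ 2 - b`, then for every `n ≥ 1` both `a n` and `a (-n)`
are roots of `x² - (qⁿ + q⁻ⁿ)·a 0·x + a 0² - [n]²·b`. -/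
theorem stmt_3 {K : Type*} [Field K] (q : K) (hq : q ≠ 0) (hq2 : q ^ 2 ≠ 1) (b : K)
    (a : ℤ → K)
    (hrec : ∀ n : ℤ, a (n + 1) + a (n - 1) = (q + q⁻¹) * a n)
    (hinit : a 1 * a (-1) = (a 0) ^ 2 - b) :
    ∀ n : ℕ, 1 ≤ n →
      (a (n : ℤ)) ^ 2 - (q ^ n + q⁻¹ ^ n) * a 0 * a (n : ℤ) +
        (a 0) ^ 2 - ((q ^ n - q⁻¹ ^ n) / (q - q⁻¹)) ^ 2 * b = 0 ∧
      (a (-(n : ℤ))) ^ 2 - (q ^ n + q⁻¹ ^ n) * a 0 * a (-(n : ℤ)) +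
        (a 0) ^ 2 - ((q ^ n - q⁻¹ ^ n) / (q - q⁻¹)) ^ 2 * b = 0 := by
  intro n _
  have hne : q ≠ q⁻¹ := fun h ↦ hq2 (by rw [sq, mul_eq_one_iff_eq_inv₀ hq, ← h])
  rw [← geom₂_sum hne n]
  exact stmt_3_general (mul_inv_cancel₀ hq) hrec hinit n
end

section
/- Let K be a field, let q ∈ K be nonzero, let R be an associative unital K-algebra, let F, Y ∈ R, and set Z := F·Y − q⁻²·(Y·F). Suppose Z commutes with both F and Y (Z·F = F·Z and Z·Y = Y·Z). Then for every n ≥ 0, the element (F + Y)ⁿ lies in the K-linear span of the monomials F^f · Z^z · Y^y with f + 2z + y = n. -/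
/-!
The hypothesis on `Z` is a reordering rule `Y F = c F Y + d Z` whose remainder `Z` commutes with `F`
and `Y`. Moving one `Y` past `F ^ (f + 1)` therefore yields only `F ^ (f + 1) Y` and `F ^ f Z`, the
latter with coefficient `d (1 + c + ⋯ + c ^ f)`. Giving `Z` degree two, both have degree `f + 2`, so
left multiplication by `F + Y` raises the degree of ordered monomials by exactly one.
-/

section Module

variable {K M : Type*} [Ring K] [AddCommGroup M] [Module K M]

theorem eq_smul_add_neg_smul_of_eq_sub_smul {a b : K} (hba : b * a = 1) {u v w : M}
    (hw : w = u - a • v) : v = b • u + (-b) • w := by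
  rw [hw, smul_sub, neg_smul, smul_smul, neg_mul, hba, neg_smul, one_smul]
  abel

end Module

section OrderedMonomials

variable (K : Type*) {R : Type*} [CommSemiring K] [Semiring R] [Algebra K R]

/-- The span of the monomials `F ^ f * Z ^ z * Y ^ y` of degree `n`, where `F` and `Y` have degree
one and `Z` has degree two: the elements that can be written in this order homogeneously. -/
def orderedMonomialSpan (F Z Y : R) (n : ℕ) : Submodule K R :=
  Submodule.span K {x : R | ∃ f z y : ℕ, f + 2 * z + y = n ∧ x = F ^ f * Z ^ z * Y ^ y}

variable {K} {F Y Z : R} {c d : K} {n : ℕ}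

theorem monomial_mem_orderedMonomialSpan {f z y : ℕ} (hn : f + 2 * z + y = n) :
    F ^ f * Z ^ z * Y ^ y ∈ orderedMonomialSpan K F Z Y n :=
  Submodule.subset_span ⟨f, z, y, hn, rfl⟩

theorem mul_mem_of_mem_orderedMonomialSpan {a x : R} {N : Submodule K R}
    (ha : ∀ f z y : ℕ, f + 2 * z + y = n → a * (F ^ f * Z ^ z * Y ^ y) ∈ N)
    (hx : x ∈ orderedMonomialSpan K F Z Y n) : a * x ∈ N := by
  have hle : orderedMonomialSpan K F Z Y n ≤ N.comap (LinearMap.mulLeft K a) :=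
    Submodule.span_le.2 (by rintro _ ⟨f, z, y, hn, rfl⟩; exact ha f z y hn)
  exact hle hx

theorem mul_pow_succ_of_mul_eq (hYF : Y * F = c • (F * Y) + d • Z) (hZF : Commute Z F) (f : ℕ) :
    Y * F ^ (f + 1) = c ^ (f + 1) • (F ^ (f + 1) * Y) +
      (d * ∑ i ∈ Finset.range (f + 1), c ^ i) • (F ^ f * Z) := by
  induction f with
  | zero => simpa using hYF
  | succ f ih =>
    have hFYF : F ^ (f + 1) * Y * F =
        c • (F ^ (f + 2) * Y) + d • (F ^ (f + 1) * Z) := by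
      rw [mul_assoc, hYF, mul_add, mul_smul_comm, mul_smul_comm, ← mul_assoc, ← pow_succ]
    have hFZF : F ^ f * Z * F = F ^ (f + 1) * Z := by
      rw [mul_assoc, hZF.eq, ← mul_assoc, ← pow_succ]
    rw [pow_succ F (f + 1), ← mul_assoc, ih, add_mul, smul_mul_assoc, smul_mul_assoc, hFYF, hFZF,
      Finset.sum_range_succ _ (f + 1), ← pow_succ F (f + 1)]
    module

theorem first_mul_mem_orderedMonomialSpan_succ {x : R} (hx : x ∈ orderedMonomialSpan K F Z Y n) :
    F * x ∈ orderedMonomialSpan K F Z Y (n + 1) := by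
  refine mul_mem_of_mem_orderedMonomialSpan (fun f z y hn => ?_) hx
  rw [← mul_assoc, ← mul_assoc, ← pow_succ']
  exact monomial_mem_orderedMonomialSpan (by omega)

theorem mul_pow_mul_pow_of_commute (hZY : Commute Z Y) (z y : ℕ) :
    Y * (Z ^ z * Y ^ y) = Z ^ z * Y ^ (y + 1) := by
  rw [← mul_assoc, ← (hZY.pow_left z).eq, mul_assoc, ← pow_succ']

theorem mul_monomial_succ_of_mul_eq (hYF : Y * F = c • (F * Y) + d • Z) (hZF : Commute Z F)
    (hZY : Commute Z Y) (f z y : ℕ) :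
    Y * (F ^ (f + 1) * Z ^ z * Y ^ y) = c ^ (f + 1) • (F ^ (f + 1) * Z ^ z * Y ^ (y + 1)) +
      (d * ∑ i ∈ Finset.range (f + 1), c ^ i) • (F ^ f * Z ^ (z + 1) * Y ^ y) := by
  rw [mul_assoc, ← mul_assoc, mul_pow_succ_of_mul_eq hYF hZF, add_mul, smul_mul_assoc,
    smul_mul_assoc, mul_assoc _ Y, mul_pow_mul_pow_of_commute hZY, pow_succ' Z]
  simp only [mul_assoc]

theorem last_mul_mem_orderedMonomialSpan_succ (hYF : Y * F = c • (F * Y) + d • Z)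
    (hZF : Commute Z F) (hZY : Commute Z Y) {x : R} (hx : x ∈ orderedMonomialSpan K F Z Y n) :
    Y * x ∈ orderedMonomialSpan K F Z Y (n + 1) := by
  refine mul_mem_of_mem_orderedMonomialSpan (fun f z y hn => ?_) hx
  cases f with
  | zero =>
    rw [mul_assoc, pow_zero, one_mul, mul_pow_mul_pow_of_commute hZY, ← one_mul (Z ^ z),
      ← pow_zero F]
    exact monomial_mem_orderedMonomialSpan (by omega)
  | succ f =>
    rw [mul_monomial_succ_of_mul_eq hYF hZF hZY]
    exact add_mem (Submodule.smul_mem _ _ (monomial_mem_orderedMonomialSpan (by omega)))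
      (Submodule.smul_mem _ _ (monomial_mem_orderedMonomialSpan (by omega)))

theorem stmt_7_general (hYF : Y * F = c • (F * Y) + d • Z) (hZF : Commute Z F)
    (hZY : Commute Z Y) (n : ℕ) : (F + Y) ^ n ∈ orderedMonomialSpan K F Z Y n := by
  induction n with
  | zero =>
    simpa using monomial_mem_orderedMonomialSpan (K := K) (F := F) (Z := Z) (Y := Y)
      (show 0 + 2 * 0 + 0 = 0 from rfl)
  | succ n ih =>
    rw [pow_succ', add_mul]
    exact add_mem (first_mul_mem_orderedMonomialSpan_succ ih)
      (last_mul_mem_orderedMonomialSpan_succ hYF hZF hZY ih)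

end OrderedMonomials

/-- If `Z := F * Y - q⁻² • (Y * F)` commutes with both `F` and `Y` in a `K`-algebra `R`,
then `(F + Y) ^ n` lies in the `K`-span of the monomials `F ^ f * Z ^ z * Y ^ y` with
`f + 2z + y = n`. -/
theorem stmt_7 {K : Type*} [Field K] (q : K) (hq : q ≠ 0)
    {R : Type*} [Ring R] [Algebra K R] (F Y Z : R)
    (hZ : Z = F * Y - (q⁻¹) ^ 2 • (Y * F))
    (hZF : Z * F = F * Z) (hZY : Z * Y = Y * Z) :
    ∀ n : ℕ, (F + Y) ^ n ∈
      Submodule.span K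
        {x : R | ∃ f z y : ℕ, f + 2 * z + y = n ∧ x = F ^ f * Z ^ z * Y ^ y} := by
  have hqq : q ^ 2 * q⁻¹ ^ 2 = 1 := by rw [← mul_pow, mul_inv_cancel₀ hq, one_pow]
  exact stmt_7_general (eq_smul_add_neg_smul_of_eq_sub_smul hqq hZ) hZF hZY
end

section
/- Let K be a field, let q ∈ K be nonzero, let R be an associative unital K-algebra, let F, Y ∈ R, set Z := F·Y − q⁻²·(Y·F), and suppose Z·F = F·Z and Z·Y = Y·Z. Let M be a left R-module and v ∈ M with Y·v = 0. Then for every n ≥ 0, the vector (F + Y)ⁿ·v − Fⁿ·v lies in the K-linear span of the vectors F^f · Z^z · v with f + 2z = n and z ≥ 1. -/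
/-!
Rewritten as `Y F = q² F Y - q² Z`, the relation lets `Y` move to the right through a power of `F`,
at the cost of trading one factor `F` for one factor `Z`. Since `Y` commutes with `Z` and kills `v`,
only the traded term survives in `Y F ^ (f + 1) Z ^ z v`, which is therefore a multiple of
`F ^ f Z ^ (z + 1) v`. Giving `F` degree `1` and `Z` degree `2`, both `F` and `Y` raise the degree
by `1`, and every application of `Y` produces a factor `Z`; induction on `n` concludes.
-/

open Finset

section Algebra

variable {K R : Type*} [CommSemiring K] [Semiring R] [Algebra K R] {p : K} {F Y W : R}

theorem mul_pow_succ_of_mul_eq_smul_add (hYF : Y * F = p • (F * Y) + W) (hWF : Commute W F)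
    (n : ℕ) :
    Y * F ^ (n + 1) =
      p ^ (n + 1) • (F ^ (n + 1) * Y) + (∑ i ∈ range (n + 1), p ^ i) • (F ^ n * W) := by
  induction n with
  | zero => simp [hYF]
  | succ n ih =>
    have hFY : F ^ (n + 1) * Y * F = p • (F ^ (n + 2) * Y) + F ^ (n + 1) * W := by
      rw [mul_assoc, hYF, mul_add, mul_smul_comm, ← mul_assoc, ← pow_succ]
    have hFW : F ^ n * W * F = F ^ (n + 1) * W := by
      rw [mul_assoc, hWF.eq, ← mul_assoc, ← pow_succ]
    calc
      Y * F ^ (n + 2) = Y * F ^ (n + 1) * F := by rw [pow_succ F (n + 1), mul_assoc]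
      _ = p ^ (n + 1) • (F ^ (n + 1) * Y * F) +
            (∑ i ∈ range (n + 1), p ^ i) • (F ^ n * W * F) := by
        rw [ih, add_mul, smul_mul_assoc, smul_mul_assoc]
      _ = p ^ (n + 2) • (F ^ (n + 2) * Y) +
            (∑ i ∈ range (n + 2), p ^ i) • (F ^ (n + 1) * W) := by
        rw [hFY, hFW, sum_range_succ _ (n + 1)]
        module

end Algebra

theorem mul_eq_smul_add_neg_smul_of_eq_sub_inv_smul {K R : Type*} [Field K] [Ring R] [Algebra K R]
    {p : K} (hp : p ≠ 0) {F Y Z : R} (hZ : Z = F * Y - p⁻¹ • (Y * F)) :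
    Y * F = p • (F * Y) + (-p) • Z := by
  rw [hZ, neg_smul, smul_sub, smul_inv_smul₀ hp]
  abel

/-- The span of the vectors `(F ^ f * Z ^ z) • v` of degree `f + 2 * z = n` that involve `Z`; it
contains the error made in replacing `(F + Y) ^ n • v` by `F ^ n • v`. -/
def positiveZSpan (K : Type*) {R M : Type*} [Semiring K] [Semiring R] [AddCommMonoid M]
    [Module K M] [Module R M] (F Z : R) (v : M) (n : ℕ) : Submodule K M :=
  Submodule.span K {m : M | ∃ f z : ℕ, f + 2 * z = n ∧ 1 ≤ z ∧ m = (F ^ f * Z ^ z) • v}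

theorem pow_mul_pow_smul_mem_positiveZSpan {K R M : Type*} [Semiring K] [Semiring R]
    [AddCommMonoid M] [Module K M] [Module R M] (F Z : R) (v : M) {f z n : ℕ}
    (hn : f + 2 * z = n) (hz : 1 ≤ z) :
    (F ^ f * Z ^ z) • v ∈ positiveZSpan K F Z v n :=
  Submodule.subset_span ⟨f, z, hn, hz, rfl⟩

theorem smul_pow_smul_eq_zero {R M : Type*} [Semiring R] [AddCommMonoid M] [Module R M]
    {Y Z : R} {v : M} (hZY : Commute Z Y) (hv : Y • v = 0) (z : ℕ) : Y • Z ^ z • v = 0 := by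
  rw [← mul_smul, ← (hZY.pow_left z).eq, mul_smul, hv, smul_zero]

section Module

variable {K R M : Type*} [CommSemiring K] [Semiring R] [Algebra K R] {p c : K} {F Y Z : R}

section AddCommMonoid

variable [AddCommMonoid M] [Module K M] [Module R M] [IsScalarTower K R M] {v : M}

theorem smul_pow_succ_mul_pow_smul (hYF : Y * F = p • (F * Y) + c • Z) (hZF : Commute Z F)
    (hZY : Commute Z Y) (hv : Y • v = 0) (f z : ℕ) :
    Y • (F ^ (f + 1) * Z ^ z) • v =
      ((∑ i ∈ range (f + 1), p ^ i) * c) • (F ^ f * Z ^ (z + 1)) • v := by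
  have hYpow := mul_pow_succ_of_mul_eq_smul_add hYF (hZF.smul_left c) f
  calc
    Y • (F ^ (f + 1) * Z ^ z) • v = (Y * F ^ (f + 1)) • Z ^ z • v := by simp only [mul_smul]
    _ = p ^ (f + 1) • F ^ (f + 1) • Y • Z ^ z • v +
          ((∑ i ∈ range (f + 1), p ^ i) * c) • F ^ f • Z • Z ^ z • v := by
      rw [hYpow, mul_smul_comm, smul_smul _ c, add_smul, smul_assoc, smul_assoc, mul_smul _ Y,
        mul_smul _ Z]
    _ = ((∑ i ∈ range (f + 1), p ^ i) * c) • (F ^ f * Z ^ (z + 1)) • v := by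
      rw [smul_pow_smul_eq_zero hZY hv, smul_zero, smul_zero, zero_add, pow_succ',
        mul_smul (F ^ f), mul_smul Z]

theorem smul_pow_mul_pow_smul_mem_positiveZSpan_succ (hYF : Y * F = p • (F * Y) + c • Z)
    (hZF : Commute Z F) (hZY : Commute Z Y) (hv : Y • v = 0) (f z : ℕ) :
    Y • (F ^ f * Z ^ z) • v ∈ positiveZSpan K F Z v (f + 2 * z + 1) := by
  cases f with
  | zero => simp [smul_pow_smul_eq_zero hZY hv]
  | succ f =>
    rw [smul_pow_succ_mul_pow_smul hYF hZF hZY hv]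
    exact Submodule.smul_mem _ _ (pow_mul_pow_smul_mem_positiveZSpan F Z v (by ring) (by omega))

theorem add_smul_mem_positiveZSpan_succ (hYF : Y * F = p • (F * Y) + c • Z)
    (hZF : Commute Z F) (hZY : Commute Z Y) (hv : Y • v = 0) {n : ℕ} {m : M}
    (hm : m ∈ positiveZSpan K F Z v n) : (F + Y) • m ∈ positiveZSpan K F Z v (n + 1) := by
  suffices h : positiveZSpan K F Z v n ≤
      (positiveZSpan K F Z v (n + 1)).comap (Algebra.lsmul K K M (F + Y)) from h hm
  refine Submodule.span_le.2 ?_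
  rintro _ ⟨f, z, rfl, hz, rfl⟩
  have hF : F • (F ^ f * Z ^ z) • v ∈ positiveZSpan K F Z v (f + 2 * z + 1) := by
    rw [← mul_smul, ← mul_assoc, ← pow_succ']
    exact pow_mul_pow_smul_mem_positiveZSpan F Z v (by ring) hz
  have hY := smul_pow_mul_pow_smul_mem_positiveZSpan_succ hYF hZF hZY hv f z
  simpa only [SetLike.mem_coe, Submodule.mem_comap, Algebra.lsmul_coe, add_smul] using
    add_mem hF hY

end AddCommMonoid

theorem stmt_8_general [AddCommGroup M] [Module K M] [Module R M] [IsScalarTower K R M] {v : M}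
    (hYF : Y * F = p • (F * Y) + c • Z) (hZF : Commute Z F) (hZY : Commute Z Y)
    (hv : Y • v = 0) (n : ℕ) :
    (F + Y) ^ n • v - F ^ n • v ∈ positiveZSpan K F Z v n := by
  induction n with
  | zero => simp
  | succ n ih =>
    have hsplit : (F + Y) ^ (n + 1) • v - F ^ (n + 1) • v =
        (F + Y) • ((F + Y) ^ n • v - F ^ n • v) + Y • F ^ n • v := by
      simp only [pow_succ', mul_smul, smul_sub, add_smul]
      abel
    have hY : Y • F ^ n • v ∈ positiveZSpan K F Z v (n + 1) := by
      simpa using smul_pow_mul_pow_smul_mem_positiveZSpan_succ hYF hZF hZY hv n 0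
    rw [hsplit]
    exact add_mem (add_smul_mem_positiveZSpan_succ hYF hZF hZY hv ih) hY

end Module

/-- If `Z := F * Y - q⁻² • (Y * F)` commutes with both `F` and `Y`, `M` is a left
`R`-module, and `Y • v = 0`, then `(F + Y) ^ n • v - F ^ n • v` lies in the `K`-span
of the vectors `(F ^ f * Z ^ z) • v` with `f + 2z = n` and `z ≥ 1`. -/
theorem stmt_8 {K : Type*} [Field K] (q : K) (hq : q ≠ 0)
    {R : Type*} [Ring R] [Algebra K R] (F Y Z : R)
    (hZ : Z = F * Y - (q⁻¹) ^ 2 • (Y * F))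
    (hZF : Z * F = F * Z) (hZY : Z * Y = Y * Z)
    {M : Type*} [AddCommGroup M] [Module K M] [Module R M] [IsScalarTower K R M]
    (v : M) (hv : Y • v = 0) :
    ∀ n : ℕ, (F + Y) ^ n • v - F ^ n • v ∈
      Submodule.span K
        {m : M | ∃ f z : ℕ, f + 2 * z = n ∧ 1 ≤ z ∧ m = (F ^ f * Z ^ z) • v} := by
  have hYF := mul_eq_smul_add_neg_smul_of_eq_sub_inv_smul (pow_ne_zero 2 hq) (inv_pow q 2 ▸ hZ)
  exact stmt_8_general hYF hZF hZY hv
end
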